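/- For every ψ < 1 with ψ ≠ 0, all k, h > 0, and all u, v ∈ (0,1), the normalized good-sector output satisfies the identities y₁(ψ) = ȳ₁·(hu/(h̄ū))·(w/w̄)·(π̄₁/π₁(ψ,w))^{1/ψ} = (ȳ₁/(k̄v̄))·(π̄₁/π₁(ψ,w))^{1/ψ}·kv, where w = kv/(hu). -/

import Mathlib

/-!
Put `B = w̄^{1−ψ}` and `X = (B·w^ψ + m)/(w̄ + m)`. The factor `B + m` cancels between `A₁` and the
CES aggregate, so that `y₁ = (ȳ₁/(h̄ū))·hu·X^{1/ψ}` (`y1_eq`). Since `B·w̄^ψ = w̄`, the ratio of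
capital shares is `π̄₁/π₁ = (w̄/w)^ψ·X`, whose power `1/ψ` is `(w̄/w)·X^{1/ψ}` (`share_ratio_rpow`).
Both identities follow by eliminating `X^{1/ψ}`.
-/


/-- The physical capital share `π₁(ψ,w) = w̄^{1−ψ} w^{ψ} / (w̄^{1−ψ} w^{ψ} + m)`. -/
noncomputable def pi1 (wb m ψ w : ℝ) : ℝ :=
  wb ^ (1 - ψ) * w ^ ψ / (wb ^ (1 - ψ) * w ^ ψ + m)

/-- Normalized distribution parameter `α₁(ψ) = w̄^{1−ψ}/(w̄^{1−ψ}+m)`. -/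
noncomputable def alpha1 (wb m ψ : ℝ) : ℝ := wb ^ (1 - ψ) / (wb ^ (1 - ψ) + m)

/-- Normalized efficiency parameter `A₁(ψ) = (ȳ₁/(h̄ū))·[(w̄^{1−ψ}+m)/(w̄+m)]^{1/ψ}`. -/
noncomputable def Anorm1 (yb hb ub wb m ψ : ℝ) : ℝ :=
  yb / (hb * ub) * ((wb ^ (1 - ψ) + m) / (wb + m)) ^ (1 / ψ)

/-- Normalized good-sector output `y₁(ψ) = A₁(ψ)·hu·(α₁(ψ)w^ψ + 1 − α₁(ψ))^{1/ψ}`. -/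
noncomputable def y1 (yb hb ub wb m h u w ψ : ℝ) : ℝ :=
  Anorm1 yb hb ub wb m ψ * (h * u)
    * (alpha1 wb m ψ * w ^ ψ + 1 - alpha1 wb m ψ) ^ (1 / ψ)

lemma y1_eq {yb hb ub wb m h u w ψ : ℝ} (hwb : 0 < wb) (hw : 0 < w) (hm : 0 < m) :
    y1 yb hb ub wb m h u w ψ
      = yb / (hb * ub) * (h * u) * ((wb ^ (1 - ψ) * w ^ ψ + m) / (wb + m)) ^ (1 / ψ) := by
  have hB : 0 < wb ^ (1 - ψ) := Real.rpow_pos_of_pos hwb _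
  have hW : 0 < w ^ ψ := Real.rpow_pos_of_pos hw _
  unfold y1 Anorm1 alpha1
  generalize wb ^ (1 - ψ) = B at *
  generalize w ^ ψ = W at *
  have hagg : B / (B + m) * W + 1 - B / (B + m) = (B * W + m) / (B + m) := by
    field_simp
    ring
  have hX : (B * W + m) / (wb + m) = (B + m) / (wb + m) * ((B * W + m) / (B + m)) := by
    field_simp
  rw [hagg, hX, Real.mul_rpow (by positivity) (by positivity)]
  ring

lemma share_ratio_rpow {wb m w ψ : ℝ} (hwb : 0 < wb) (hw : 0 < w) (hm : 0 < m) (hψ0 : ψ ≠ 0) :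
    (wb / (wb + m) / pi1 wb m ψ w) ^ (1 / ψ)
      = wb / w * ((wb ^ (1 - ψ) * w ^ ψ + m) / (wb + m)) ^ (1 / ψ) := by
  have hB : 0 < wb ^ (1 - ψ) := Real.rpow_pos_of_pos hwb _
  have hV : 0 < wb ^ ψ := Real.rpow_pos_of_pos hwb _
  have hW : 0 < w ^ ψ := Real.rpow_pos_of_pos hw _
  have hBV : wb ^ (1 - ψ) * wb ^ ψ = wb := by
    rw [← Real.rpow_add hwb, sub_add_cancel, Real.rpow_one]
  have hratio : wb / (wb + m) / pi1 wb m ψ w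
      = (wb / w) ^ ψ * ((wb ^ (1 - ψ) * w ^ ψ + m) / (wb + m)) := by
    rw [Real.div_rpow hwb.le hw.le, pi1]
    generalize wb ^ (1 - ψ) = B at *
    generalize wb ^ ψ = V at *
    generalize w ^ ψ = W at *
    subst hBV
    field_simp
  rw [hratio, Real.mul_rpow (by positivity) (by positivity), ← Real.rpow_mul (by positivity),
    mul_one_div_cancel hψ0, Real.rpow_one]

/-- for every `ψ < 1` with `ψ ≠ 0`, all `k, h > 0` and `u, v ∈ (0,1)`,
`y₁(ψ) = ȳ₁·(hu/(h̄ū))·(w/w̄)·(π̄₁/π₁(ψ,w))^{1/ψ} = (ȳ₁/(k̄v̄))·(π̄₁/π₁(ψ,w))^{1/ψ}·kv`,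
where `w = kv/(hu)`. -/
theorem stmt_18 (kb hb yb ub vb m k h u v wb πb w ψ : ℝ)
    (hkb : 0 < kb) (hhb : 0 < hb) (hyb : 0 < yb)
    (hub : ub ∈ Set.Ioo (0 : ℝ) 1) (hvb : vb ∈ Set.Ioo (0 : ℝ) 1) (hm : 0 < m)
    (hwb : wb = kb * vb / (hb * ub)) (hπb : πb = wb / (wb + m))
    (hk : 0 < k) (hh : 0 < h) (hu : u ∈ Set.Ioo (0 : ℝ) 1) (hv : v ∈ Set.Ioo (0 : ℝ) 1)
    (hwdef : w = k * v / (h * u))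
    (hψ : ψ < 1) (hψ0 : ψ ≠ 0) :
    y1 yb hb ub wb m h u w ψ
        = yb * (h * u / (hb * ub)) * (w / wb) * (πb / pi1 wb m ψ w) ^ (1 / ψ)
    ∧ y1 yb hb ub wb m h u w ψ
        = yb / (kb * vb) * (πb / pi1 wb m ψ w) ^ (1 / ψ) * (k * v) := by
  have hub0 := hub.1
  have hvb0 := hvb.1
  have hu0 := hu.1
  have hv0 := hv.1
  have hwb0 : 0 < wb := by rw [hwb]; positivity
  have hw0 : 0 < w := by rw [hwdef]; positivity
  rw [y1_eq hwb0 hw0 hm, hπb, share_ratio_rpow hwb0 hw0 hm hψ0]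
  -- `w` and `w̄` are expanded only outside the power, which stays atomic.
  generalize ((wb ^ (1 - ψ) * w ^ ψ + m) / (wb + m)) ^ (1 / ψ) = Y
  constructor
  · field_simp
  · rw [hwb, hwdef]
    field_simp
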